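/- For all integers 0 ≤ j ≤ k+1, the identity (1 − C̃^{k+2}) · Ĝ_k^{(j)} = t^j · (1 + C̃)^{j+1} · (1 − C̃^{k−j+1}) holds in ℚ[[t]]. -/

import Mathlib

/-- A ballot path: a sequence of steps, each `+1` or `-1`, all of whose
partial sums are nonnegative. -/
def IsBallot (P : List ℤ) : Prop :=
  (∀ s ∈ P, s = 1 ∨ s = -1) ∧ ∀ k, 0 ≤ (P.take k).sum

/-- The height of a path: the maximum of its partial sums (`0` for the empty path). -/
def pathHeight (P : List ℤ) : ℤ :=
  (((List.range (P.length + 1)).map fun k => (P.take k).sum).foldr max 0)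

/-- `Ghat k j` is the generating function (in `t`, counting by number of steps)
for ballot paths of height at most `k` ending at level `j`. -/
noncomputable def Ghat (k j : ℕ) : PowerSeries ℚ :=
  PowerSeries.mk fun N =>
    (Nat.card {P : List ℤ //
      IsBallot P ∧ P.length = N ∧ P.sum = (j : ℤ) ∧ pathHeight P ≤ (k : ℤ)} : ℚ)

/-- The power series `C̃ = ∑_{n ≥ 1} (catalan n) t^{2n}`. -/
def catalanSeriesT : PowerSeries ℚ :=
  PowerSeries.mk fun n => if n % 2 = 0 ∧ n ≠ 0 then (catalan (n / 2) : ℚ) else 0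


theorem catT_eq : (1 + catalanSeriesT) =
    PowerSeries.expand 2 two_ne_zero
      (PowerSeries.map (Nat.castRingHom ℚ) PowerSeries.catalanSeries) := by
  ext n
  rw [PowerSeries.coeff_expand]
  rcases Nat.eq_zero_or_pos n with rfl | hn
  · simp [catalanSeriesT]
  · have : n ≠ 0 := by omega
    simp [catalanSeriesT, PowerSeries.coeff_one, this, Nat.dvd_iff_mod_eq_zero]

theorem catT_rel : catalanSeriesT = PowerSeries.X ^ 2 * (1 + catalanSeriesT) ^ 2 := by
  have h := congrArg (fun f => PowerSeries.expand 2 two_ne_zero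
    (PowerSeries.map (Nat.castRingHom ℚ) f)) PowerSeries.catalanSeries_sq_mul_X_add_one
  simp only [map_add, map_mul, map_pow, map_one, PowerSeries.map_X, PowerSeries.expand_X,
    ← catT_eq] at h
  linear_combination -h

/-- Paths with all partial sums in `[0,k]`, of length `N`, ending at `j`. -/
def pset (k N : ℕ) (j : ℤ) : Set (List ℤ) :=
  {P | (∀ s ∈ P, s = 1 ∨ s = -1) ∧ (∀ m, 0 ≤ (P.take m).sum ∧ (P.take m).sum ≤ k) ∧
    P.length = N ∧ P.sum = j}

theorem foldr_max_le (l : List ℤ) (k : ℤ) (hk : 0 ≤ k) :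
    l.foldr max 0 ≤ k ↔ ∀ x ∈ l, x ≤ k := by
  induction l with
  | nil => simpa using hk
  | cons a l ih => simp [ih]

theorem pathHeight_le (P : List ℤ) (k : ℕ) :
    pathHeight P ≤ k ↔ ∀ m, (P.take m).sum ≤ k := by
  unfold pathHeight
  rw [foldr_max_le _ _ (by positivity)]
  simp only [List.mem_map, List.mem_range, forall_exists_index, and_imp,
    forall_apply_eq_imp_iff₂]
  constructor
  · intro h m
    by_cases hm : m < P.length + 1
    · exact h m hm
    · have := h P.length (by omega)
      rw [List.take_of_length_le (by omega)]
      simpa using this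
  · intro h m _
    exact h m

theorem coeff_Ghat (k j N : ℕ) :
    PowerSeries.coeff N (Ghat k j) = ((pset k N j).ncard : ℚ) := by
  simp only [Ghat, PowerSeries.coeff_mk]
  rw [← Nat.card_coe_set_eq]
  congr 2
  have : ∀ P : List ℤ, (IsBallot P ∧ P.length = N ∧ P.sum = (j : ℤ) ∧ pathHeight P ≤ (k : ℤ)) ↔
      P ∈ pset k N j := by
    intro P
    rw [pathHeight_le]
    simp only [IsBallot, pset, Set.mem_ofPred_eq, forall_and]
    tauto
  simp only [this]

theorem pset_zero (k : ℕ) (j : ℤ) : (pset k 0 j).ncard = if j = 0 then 1 else 0 := by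
  have : pset k 0 j = if j = 0 then {[]} else ∅ := by
    ext P
    cases P with
    | nil =>
      by_cases h : j = 0
      · simp [pset, h]
      · simp [pset, h, Ne.symm h]
    | cons a l => split_ifs <;> simp [pset]
  rw [this]
  split_ifs <;> simp

theorem mem_snoc (k N : ℕ) (j : ℤ) (hj : 0 ≤ j) (hk : j ≤ k) (Q : List ℤ) (s : ℤ) :
    Q ++ [s] ∈ pset k (N + 1) j ↔ (s = 1 ∨ s = -1) ∧ Q ∈ pset k N (j - s) := by
  simp only [pset, Set.mem_ofPred_eq, List.mem_append, List.mem_singleton, List.length_append,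
    List.length_singleton, List.sum_append, List.sum_singleton]
  constructor
  · rintro ⟨h1, h2, h3, h4⟩
    refine ⟨h1 s (Or.inr rfl), fun x hx => h1 x (Or.inl hx), fun m => ?_, by omega, by omega⟩
    have := h2 (min m Q.length)
    rw [List.take_append_of_le_length (by omega)] at this
    simpa [List.take_eq_take_min] using this
  · rintro ⟨h0, h1, h2, h3, h4⟩
    refine ⟨?_, fun m => ?_, by omega, by omega⟩
    · rintro x (hx | rfl)
      · exact h1 x hx
      · exact h0
    · by_cases hm : m ≤ Q.length
      · rw [List.take_append_of_le_length hm]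
        exact h2 m
      · rw [List.take_of_length_le (by simp; omega)]
        simp only [List.sum_append, List.sum_singleton]
        omega

theorem pset_succ (k N : ℕ) (j : ℤ) (hj : 0 ≤ j) (hk : j ≤ k) :
    pset k (N + 1) j = Set.image (fun Q => Q ++ [1]) (pset k N (j - 1)) ∪
      Set.image (fun Q => Q ++ [-1]) (pset k N (j + 1)) := by
  ext P
  rcases List.eq_nil_or_concat P with rfl | ⟨Q, s, rfl⟩
  · simp [pset]
  · rw [List.concat_eq_append, mem_snoc k N j hj hk]
    simp only [Set.mem_union, Set.mem_image]
    constructor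
    · rintro ⟨rfl | rfl, h⟩
      · exact Or.inl ⟨Q, h, rfl⟩
      · exact Or.inr ⟨Q, by simpa using h, rfl⟩
    · rintro (⟨Q', h, e⟩ | ⟨Q', h, e⟩)
      · obtain ⟨rfl, e2⟩ := List.append_inj' e rfl
        simp only [List.cons.injEq, and_true] at e2
        subst e2
        exact ⟨Or.inl rfl, h⟩
      · obtain ⟨rfl, e2⟩ := List.append_inj' e rfl
        simp only [List.cons.injEq, and_true] at e2
        subst e2
        exact ⟨Or.inr rfl, by simpa using h⟩

theorem pset_empty (k N : ℕ) (j : ℤ) (h : j < 0 ∨ (k : ℤ) < j) : pset k N j = ∅ := by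
  ext P
  simp only [pset, Set.mem_ofPred_eq, Set.mem_empty_iff_false, iff_false]
  rintro ⟨-, h2, -, h4⟩
  have := h2 P.length
  rw [List.take_length] at this
  omega

theorem pset_finite (k N : ℕ) : ∀ j, (pset k N j).Finite := by
  induction N with
  | zero =>
    intro j
    refine (Set.finite_singleton ([] : List ℤ)).subset ?_
    rintro P ⟨-, -, h, -⟩
    simpa using h
  | succ N ih =>
    intro j
    by_cases h : j < 0 ∨ (k : ℤ) < j
    · rw [pset_empty k _ j h]
      exact Set.finite_empty
    · rw [pset_succ k N j (by omega) (by omega)]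
      exact ((ih _).image _).union ((ih _).image _)

theorem ncard_succ (k N : ℕ) (j : ℤ) (hj : 0 ≤ j) (hk : j ≤ k) :
    (pset k (N + 1) j).ncard = (pset k N (j - 1)).ncard + (pset k N (j + 1)).ncard := by
  rw [pset_succ k N j hj hk, Set.ncard_union_eq ?_ ((pset_finite k N _).image _)
    ((pset_finite k N _).image _), Set.ncard_image_of_injective _ (List.append_left_injective _),
    Set.ncard_image_of_injective _ (List.append_left_injective _)]
  rw [Set.disjoint_left]
  rintro P ⟨Q, -, rfl⟩ ⟨Q', -, e⟩
  have := (List.append_inj' e rfl).2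
  simp at this

theorem Ghat_top (k : ℕ) : Ghat k (k + 1) = 0 := by
  ext N
  rw [coeff_Ghat, pset_empty _ _ _ (Or.inr (by push_cast; omega))]
  simp

theorem Ghat_zero (k : ℕ) : Ghat k 0 = 1 + PowerSeries.X * Ghat k 1 := by
  ext N
  cases N with
  | zero => simp [coeff_Ghat, pset_zero]
  | succ N =>
    rw [map_add, PowerSeries.coeff_succ_X_mul, coeff_Ghat, coeff_Ghat,
      ncard_succ _ _ _ (by simp) (by simp), pset_empty k N _ (Or.inl (by simp))]
    simp [PowerSeries.coeff_one]

theorem Ghat_succ (k j : ℕ) (h : j + 1 ≤ k) :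
    Ghat k (j + 1) = PowerSeries.X * (Ghat k j + Ghat k (j + 2)) := by
  ext N
  cases N with
  | zero =>
    have : (j : ℤ) + 1 ≠ 0 := by omega
    simp [coeff_Ghat, pset_zero, this]
  | succ N =>
    rw [PowerSeries.coeff_succ_X_mul, map_add, coeff_Ghat, coeff_Ghat, coeff_Ghat,
      ncard_succ _ _ _ (by positivity) (by exact_mod_cast h)]
    push_cast
    rw [show (j : ℤ) + 1 - 1 = j by ring, show (j : ℤ) + 1 + 1 = j + 2 by ring]

theorem uniq (k : ℕ) (H : ℕ → PowerSeries ℚ) (h0 : H 0 = PowerSeries.X * H 1)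
    (h1 : ∀ j, j + 1 ≤ k → H (j + 1) = PowerSeries.X * (H j + H (j + 2)))
    (h2 : H (k + 1) = 0) (j : ℕ) (hj : j ≤ k + 1) : H j = 0 := by
  have key : ∀ N, ∀ j, j ≤ k + 1 → PowerSeries.coeff N (H j) = 0 := by
    intro N
    induction N with
    | zero =>
      intro j hj
      rcases Nat.eq_or_lt_of_le hj with rfl | hlt
      · simp [h2]
      · cases j with
        | zero => rw [h0]; simp
        | succ j => rw [h1 j (by omega)]; simp
    | succ N ih =>
      intro j hj
      rcases Nat.eq_or_lt_of_le hj with rfl | hlt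
      · simp [h2]
      · cases j with
        | zero => rw [h0, PowerSeries.coeff_succ_X_mul]; exact ih 1 (by omega)
        | succ j =>
          rw [h1 j (by omega), PowerSeries.coeff_succ_X_mul, map_add, ih j (by omega),
            ih (j + 2) (by omega), add_zero]
  ext N
  simpa using key N j hj

theorem Ghat_formula (k j : ℕ) (hjk : j ≤ k + 1) :
    (1 - catalanSeriesT ^ (k + 2)) * Ghat k j =
      PowerSeries.X ^ j * (1 + catalanSeriesT) ^ (j + 1) *
        (1 - catalanSeriesT ^ (k + 1 - j)) := by
  have hc := catT_rel
  generalize catalanSeriesT = c at hc ⊢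
  refine sub_eq_zero.mp (uniq k (fun j => (1 - c ^ (k + 2)) * Ghat k j -
    PowerSeries.X ^ j * (1 + c) ^ (j + 1) * (1 - c ^ (k + 1 - j))) ?_ ?_ ?_ j hjk)
  · simp only [Ghat_zero k, Nat.add_sub_cancel, Nat.sub_zero]
    linear_combination (c ^ k - 1) * hc
  · intro j hj
    obtain ⟨m, rfl⟩ := Nat.exists_eq_add_of_le hj
    simp only [Ghat_succ _ j hj]
    rw [show j + 1 + m + 1 - (j + 1) = m + 1 by omega, show j + 1 + m + 1 - j = m + 2 by omega,
      show j + 1 + m + 1 - (j + 2) = m by omega]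
    linear_combination (PowerSeries.X ^ (j + 1) * (1 + c) ^ (j + 1) * (c ^ m - 1)) * hc
  · simp [Ghat_top]
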